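/- arXiv:2205.10105 — 2 statements merged into one kernel-verified Lean document; each statement's English description precedes it below -/
import Mathlib

section
/- Let T be a finite tree rooted at r and let P \subseteq V(T) \times V(T) be a nonempty set of terminal pairs. Let v be a vertex furthest from r such that there is a pair (s,t) \in P with both s,t \in V(T_v). Then every terminal pair path of P whose both endpoints lie in V(T_v) passes through v, and there exists a minimum-size P-multicut in T that contains v. -/
open SimpleGraph

section Defs

variable {V : Type*}

/-- `v` lies on every path from `a` to `b` in `G`; in a tree this says that `v`
lies on the unique `(a,b)`-path. -/
def OnPath (G : SimpleGraph V) (a b v : V) : Prop :=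
  ∀ p : G.Walk a b, p.IsPath → v ∈ p.support

/-- `u` belongs to the subtree `T_v` of the tree `G` rooted at `r`, i.e. `v` lies on
the unique `(r,u)`-path. -/
def InSubtree (G : SimpleGraph V) (r v u : V) : Prop :=
  OnPath G r u v

/-- The vertex set of the subtree `T_v` of the tree `G` rooted at `r`. -/
def SubtreeSet (G : SimpleGraph V) (r v : V) : Set V :=
  {u | InSubtree G r v u}

/-- `S` is a `P`-multicut in `G`: it meets every path between each terminal pair. -/
def IsMulticut (G : SimpleGraph V) (P : Set (V × V)) (S : Set V) : Prop :=
  ∀ s t : V, (s, t) ∈ P → ∀ p : G.Walk s t, p.IsPath → ∃ v ∈ S, v ∈ p.support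

/-- `S` is a `P`-multicut in the subgraph of `G` induced by `A`: it meets every
path staying inside `A` between each terminal pair with both ends in `A`. -/
def IsMulticutOn (G : SimpleGraph V) (A : Set V) (P : Set (V × V)) (S : Set V) : Prop :=
  ∀ s t : V, (s, t) ∈ P → s ∈ A → t ∈ A →
    ∀ p : G.Walk s t, p.IsPath → (∀ u ∈ p.support, u ∈ A) → ∃ v ∈ S, v ∈ p.support

/-- `w` is a least common ancestor of `u` and `v` in the tree `G` rooted at `r`:
`u, v ∈ T_w` and `w` is furthest from `r` with this property. -/
def IsLCA (G : SimpleGraph V) (r u v w : V) : Prop :=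
  InSubtree G r w u ∧ InSubtree G r w v ∧
    ∀ w' : V, InSubtree G r w' u → InSubtree G r w' v → G.dist r w' ≤ G.dist r w

/-- `X` is closed under taking least common ancestors. -/
def LCAClosed (G : SimpleGraph V) (r : V) (X : Set V) : Prop :=
  ∀ u ∈ X, ∀ v ∈ X, ∀ w : V, IsLCA G r u v w → w ∈ X

/-- The vertex set of `T^†_{v,x}` for a descendant `x` of `v`:
all vertices `u ≠ v` of `T_v` that either lie in `T_x` or whose path to `x`
avoids `v`.  (For `v = x` this is `T_x \ {x}`.) -/
def TdagSet (G : SimpleGraph V) (r v x : V) : Set V :=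
  {u | u ≠ v ∧ InSubtree G r v u ∧
    (InSubtree G r x u ∨ ∀ p : G.Walk u x, p.IsPath → v ∉ p.support)}

/-- `I[v]`: terminal pairs with both endpoints in `T_v` whose path passes through `v`. -/
def Ibr (G : SimpleGraph V) (r : V) (P : Set (V × V)) (v : V) : Set (V × V) :=
  {q | q ∈ P ∧ InSubtree G r v q.1 ∧ InSubtree G r v q.2 ∧ OnPath G q.1 q.2 v}

/-- `O[v]`: terminal pairs with exactly one endpoint in `T_v`. -/
def Obr (G : SimpleGraph V) (r : V) (P : Set (V × V)) (v : V) : Set (V × V) :=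
  {q | q ∈ P ∧ ((InSubtree G r v q.1 ∧ ¬ InSubtree G r v q.2) ∨
    (¬ InSubtree G r v q.1 ∧ InSubtree G r v q.2))}

end Defs

/-!
If the path of a terminal pair with both endpoints in `T_v` avoided `v`, both endpoints would
lie below a single child of `v`, contradicting the choice of `v`. Hence a pair whose path avoids
`v` has an endpoint outside `T_v`, and its path avoids `T_v` altogether. Since some pair has both
endpoints in `T_v`, a minimum multicut contains a vertex `x` of `T_v`, and replacing `x` by `v`
leaves it a multicut of at most the same size.
-/

section Multicut

variable {V : Type*} {G : SimpleGraph V} {P : Set (V × V)} {S : Set V} {a b r s t v w x : V}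

theorem OnPath.mem_support (h : OnPath G a b v) (p : G.Walk a b) : v ∈ p.support := by
  classical
  exact p.support_bypass_subset_support (h p.bypass p.bypass_isPath)

theorem OnPath.of_mem_support_isPath (hG : G.IsAcyclic) (h : OnPath G a b v) {q : G.Walk v b}
    (hq : q.IsPath) (hw : w ∈ q.support) : OnPath G a b w := by
  classical
  intro p hp
  have hv : v ∈ p.support := h p hp
  have hqp : q = p.dropUntil v hv :=
    congrArg Subtype.val ((hG.subsingleton_path v b).elim ⟨q, hq⟩ ⟨_, hp.dropUntil hv⟩)
  exact p.support_dropUntil_subset_support hv (hqp ▸ hw)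

namespace InSubtree

protected theorem refl : InSubtree G r v v := fun p _ => p.end_mem_support

theorem of_notMem_support (h : InSubtree G r v a) (q : G.Walk a b) (hq : v ∉ q.support) :
    InSubtree G r v b := by
  intro p _
  have hv : v ∈ (p.append q.reverse).support := h.mem_support _
  rw [Walk.mem_support_append_iff, Walk.support_reverse, List.mem_reverse] at hv
  exact hv.resolve_right hq

theorem endpoints_of_mem_support (hx : InSubtree G r v x) {p : G.Walk a b}
    (hxp : x ∈ p.support) (hv : v ∉ p.support) : InSubtree G r v a ∧ InSubtree G r v b := by
  classical
  constructor
  · refine hx.of_notMem_support (p.takeUntil x hxp).reverse fun h => hv ?_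
    rw [Walk.support_reverse, List.mem_reverse] at h
    exact p.support_takeUntil_subset_support hxp h
  · exact hx.of_notMem_support (p.dropUntil x hxp) fun h =>
      hv (p.support_dropUntil_subset_support hxp h)

theorem of_mem_support_isPath (ha : InSubtree G r v a) (hb : InSubtree G r v b)
    {p : G.Walk a b} (hp : p.IsPath) (hx : x ∈ p.support) : InSubtree G r v x := by
  obtain ⟨q₁, q₂, rfl⟩ := Walk.mem_support_iff_exists_append.mp hx
  rcases eq_or_ne v x with rfl | hvx
  · exact InSubtree.refl
  by_cases h₁ : v ∈ q₁.support
  · have h₂ : v ∉ q₂.support := fun h₂ => hp.ne_of_mem_support_of_append hvx h₁ h₂ rfl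
    exact hb.of_notMem_support q₂.reverse (by rwa [Walk.support_reverse, List.mem_reverse])
  · exact ha.of_notMem_support q₁ h₁

theorem dist_lt (h : InSubtree G r v w) (hvw : v ≠ w) (hr : G.Reachable r w) :
    G.dist r v < G.dist r w := by
  classical
  obtain ⟨p, hp⟩ := hr.exists_walk_length_eq_dist
  have hv : v ∈ p.support := h.mem_support p
  calc G.dist r v ≤ (p.takeUntil v hv).length := dist_le _
    _ < p.length := p.length_takeUntil_lt_length hv hvw
    _ = G.dist r w := hp

theorem exists_adj_of_notMem_support (hG : G.IsAcyclic) (hs : InSubtree G r v s)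
    (ht : InSubtree G r v t) (hvs : G.Reachable v s) {p : G.Walk s t} (hv : v ∉ p.support) :
    ∃ w, G.Adj v w ∧ InSubtree G r v w ∧ InSubtree G r w s ∧ InSubtree G r w t := by
  classical
  obtain ⟨q, hq⟩ := hvs.exists_isPath
  cases q with
  | nil => exact absurd p.start_mem_support hv
  | @cons _ w _ hvw q =>
    have hvq : v ∉ q.support := ((Walk.cons_isPath_iff hvw q).mp hq).2
    have hvqp : v ∉ (q.append p).support := by
      rw [Walk.mem_support_append_iff, not_or]
      exact ⟨hvq, hv⟩
    have hpath : (Walk.cons hvw (q.append p).bypass).IsPath :=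
      (Walk.bypass_isPath _).cons fun h => hvqp (Walk.support_bypass_subset_support _ h)
    exact ⟨w, hvw, (hs.endpoints_of_mem_support q.end_mem_support hvq).1,
      OnPath.of_mem_support_isPath hG hs hq (by simp),
      OnPath.of_mem_support_isPath hG ht hpath (by simp)⟩

end InSubtree

theorem onPath_of_forall_dist_le (hG : G.IsTree)
    (hfar : ∀ u, InSubtree G r u s → InSubtree G r u t → G.dist r u ≤ G.dist r v)
    (hs : InSubtree G r v s) (ht : InSubtree G r v t) : OnPath G s t v := by
  intro p _
  by_contra hv
  obtain ⟨w, hvw, hw, hws, hwt⟩ :=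
    hs.exists_adj_of_notMem_support hG.isAcyclic ht (hG.connected v s) hv
  exact (hfar w hws hwt).not_gt (hw.dist_lt hvw.ne (hG.connected r w))

namespace IsMulticut

protected theorem univ : IsMulticut G P Set.univ :=
  fun s _ _ p _ => ⟨s, Set.mem_univ s, p.start_mem_support⟩

theorem exists_encard_minimal (G : SimpleGraph V) (P : Set (V × V)) :
    ∃ S, IsMulticut G P S ∧ ∀ S', IsMulticut G P S' → S.encard ≤ S'.encard := by
  obtain ⟨S, hS, hmin⟩ :=
    exists_minimalFor_of_wellFoundedLT (IsMulticut G P) Set.encard ⟨Set.univ, IsMulticut.univ⟩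
  exact ⟨S, hS, fun S' hS' => (le_total _ _).elim id (hmin hS')⟩

theorem exists_mem_inSubtree (hS : IsMulticut G P S) (hst : (s, t) ∈ P) (hr : G.Reachable s t)
    (hs : InSubtree G r v s) (ht : InSubtree G r v t) : ∃ x ∈ S, InSubtree G r v x := by
  obtain ⟨p, hp⟩ := hr.exists_isPath
  obtain ⟨x, hxS, hxp⟩ := hS s t hst p hp
  exact ⟨x, hxS, hs.of_mem_support_isPath ht hp hxp⟩

theorem insert_sdiff_singleton (hS : IsMulticut G P S) (hx : InSubtree G r v x)
    (hv : ∀ s t, (s, t) ∈ P → InSubtree G r v s → InSubtree G r v t → OnPath G s t v) :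
    IsMulticut G P (insert v (S \ {x})) := by
  intro s t hst p hp
  by_cases hvp : v ∈ p.support
  · exact ⟨v, Set.mem_insert _ _, hvp⟩
  obtain ⟨y, hyS, hyp⟩ := hS s t hst p hp
  have hyx : y ≠ x := by
    rintro rfl
    obtain ⟨hs, ht⟩ := hx.endpoints_of_mem_support hyp hvp
    exact hvp (hv s t hst hs ht p hp)
  exact ⟨y, Set.mem_insert_of_mem _ ⟨hyS, hyx⟩, hyp⟩

end IsMulticut

theorem encard_insert_sdiff_singleton_le (hx : x ∈ S) (v : V) :
    (insert v (S \ {x})).encard ≤ S.encard :=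
  (Set.encard_insert_le _ v).trans_eq (Set.encard_sdiff_singleton_add_one hx)

/-- Sizes are measured by `encard` since `ncard` is `0` on infinite sets. -/
theorem stmt_4_general (hG : G.IsTree)
    (hex : ∃ s t, (s, t) ∈ P ∧ InSubtree G r v s ∧ InSubtree G r v t)
    (hfar : ∀ u, (∃ s t, (s, t) ∈ P ∧ InSubtree G r u s ∧ InSubtree G r u t) →
      G.dist r u ≤ G.dist r v) :
    (∀ s t, (s, t) ∈ P → InSubtree G r v s → InSubtree G r v t → OnPath G s t v) ∧
    ∃ S, IsMulticut G P S ∧ v ∈ S ∧ ∀ S', IsMulticut G P S' → S.encard ≤ S'.encard := by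
  have hv : ∀ s t, (s, t) ∈ P → InSubtree G r v s → InSubtree G r v t → OnPath G s t v :=
    fun s t hst => onPath_of_forall_dist_le hG fun u hs ht => hfar u ⟨s, t, hst, hs, ht⟩
  obtain ⟨s, t, hst, hs, ht⟩ := hex
  obtain ⟨S, hS, hmin⟩ := IsMulticut.exists_encard_minimal G P
  obtain ⟨x, hxS, hx⟩ := hS.exists_mem_inSubtree hst (hG.connected s t) hs ht
  exact ⟨hv, insert v (S \ {x}), hS.insert_sdiff_singleton hx hv, Set.mem_insert _ _,
    fun S' hS' => (encard_insert_sdiff_singleton_le hxS v).trans (hmin S' hS')⟩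

end Multicut

/-- Let `v` be a vertex furthest from the root `r` such that some terminal pair
has both endpoints in `T_v`.  Then every terminal pair path with both endpoints
in `T_v` passes through `v`, and some minimum-size `P`-multicut contains `v`. -/
theorem stmt_4 {V : Type*} [Fintype V] (T : SimpleGraph V) (hT : T.IsTree) (r : V)
    (P : Set (V × V)) (hP : P.Nonempty) (v : V)
    (hex : ∃ s t : V, (s, t) ∈ P ∧ InSubtree T r v s ∧ InSubtree T r v t)
    (hfar : ∀ u : V, (∃ s t : V, (s, t) ∈ P ∧ InSubtree T r u s ∧ InSubtree T r u t) →
      T.dist r u ≤ T.dist r v) :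
    (∀ s t : V, (s, t) ∈ P → InSubtree T r v s → InSubtree T r v t → OnPath T s t v) ∧
    ∃ S : Set V, IsMulticut T P S ∧ v ∈ S ∧
      ∀ S' : Set V, IsMulticut T P S' → S.ncard ≤ S'.ncard := by
  obtain ⟨hv, S, hS, hvS, hmin⟩ := stmt_4_general hT hex hfar
  exact ⟨hv, S, hS, hvS, fun S' hS' => ENat.toNat_le_toNat (hmin S' hS')
    (Set.encard_ne_top_iff.mpr S'.toFinite)⟩
end

section
/- Let T be a finite tree rooted at r, let P \subseteq V(T) \times V(T) be a set of terminal pairs, and let X be a P-multicut in T that is closed under taking least common ancestors. Let x \in X and let y \in X be the unique closest strict ancestor of x belonging to X. Then for every vertex v on the (y,x)-path other than y, every terminal pair path of P contained in T_v either passes through x or is contained in T_x; equivalently, no terminal pair path of P is contained in T_v - V(T_x). -/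
open SimpleGraph

/-!
A vertex `u ∈ X` on a terminal path inside `T_v - V(T_x)` has, together with `x`, the common
ancestor `v`. Their least common ancestor `w` is therefore at least as deep as `v`, and so strictly
deeper than `y`. But `w ∈ X` by closure, and `w` is a strict ancestor of `x` because `u ∉ T_x`;
this contradicts the choice of `y`.

In an arbitrary graph, `InSubtree G r v u` is the dominator relation of flow graphs.
-/

section OnPath

variable {V : Type*} {G : SimpleGraph V} {a b v w : V}

theorem onPath_left : OnPath G a b a :=
  fun p _ => p.start_mem_support

theorem reachable_of_not_onPath (h : ¬ OnPath G a b v) : G.Reachable a b := by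
  by_contra hab
  exact h fun p _ => absurd p.reachable hab

theorem OnPath.trans (hv : OnPath G a b v) (hw : OnPath G v b w) : OnPath G a b w := by
  classical
  intro p hp
  have hvp := hv p hp
  exact p.support_dropUntil_subset_support hvp (hw _ (hp.dropUntil hvp))

theorem OnPath.reachable_left (h : OnPath G a b v) (hab : G.Reachable a b) :
    G.Reachable a v := by
  classical
  obtain ⟨p, hp⟩ := hab.exists_isPath
  exact ⟨p.takeUntil v (h p hp)⟩

theorem OnPath.dist_add_dist (h : OnPath G a b v) (hab : G.Reachable a b) :
    G.dist a v + G.dist v b = G.dist a b := by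
  classical
  obtain ⟨p, hp, hlen⟩ := hab.exists_path_of_dist
  have hvp := h p hp
  refine le_antisymm ?_ ((h.reachable_left hab).dist_triangle_left b)
  calc G.dist a v + G.dist v b
      ≤ (p.takeUntil v hvp).length + (p.dropUntil v hvp).length :=
        add_le_add (dist_le _) (dist_le _)
    _ = G.dist a b := by rw [← Walk.length_append, p.take_spec, hlen]

theorem OnPath.dist_lt_dist (hv : OnPath G a b v) (hw : OnPath G v b w)
    (hab : G.Reachable a b) (hwv : w ≠ v) : G.dist a v < G.dist a w := by
  have hvb : G.Reachable v b := (hv.reachable_left hab).symm.trans hab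
  have hpos : 0 < G.dist v w := (hw.reachable_left hvb).pos_dist_of_ne hwv.symm
  have hav := hv.dist_add_dist hab
  have hvw := hw.dist_add_dist hvb
  have haw := (hv.trans hw).dist_add_dist hab
  omega

theorem finite_setOf_onPath (hab : G.Reachable a b) : {v | OnPath G a b v}.Finite := by
  obtain ⟨p, hp⟩ := hab.exists_isPath
  exact p.support.finite_toSet.subset fun _ h => h p hp

end OnPath

section RootedGraph

variable {V : Type*} {G : SimpleGraph V} {r : V}

theorem exists_isLCA {u : V} (hu : G.Reachable r u) (v : V) : ∃ w, IsLCA G r u v w := by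
  obtain ⟨w, ⟨hwu, hwv⟩, hmax⟩ :=
    Set.exists_max_image {w | InSubtree G r w u ∧ InSubtree G r w v} (G.dist r)
      ((finite_setOf_onPath hu).subset fun _ h => h.1) ⟨r, onPath_left, onPath_left⟩
  exact ⟨w, hwu, hwv, fun w' hu' hv' => hmax w' ⟨hu', hv'⟩⟩

theorem stmt_6_general {P : Set (V × V)} {X : Set V}
    (hX : IsMulticut G P X) (hcl : LCAClosed G r X)
    {x y : V} (hrx : G.Reachable r x) (hx : x ∈ X) (hyx : InSubtree G r y x)
    (hclosest : ∀ y' ∈ X, y' ≠ x → InSubtree G r y' x → G.dist r y' ≤ G.dist r y)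
    {v : V} (hv : OnPath G y x v) (hvy : v ≠ y) :
    ¬ ∃ s t : V, (s, t) ∈ P ∧ ∃ p : G.Walk s t, p.IsPath ∧
        ∀ u ∈ p.support, InSubtree G r v u ∧ ¬ InSubtree G r x u := by
  rintro ⟨s, t, hst, p, hp, hsupport⟩
  obtain ⟨u, huX, hup⟩ := hX s t hst p hp
  obtain ⟨hvu, hxu⟩ := hsupport u hup
  obtain ⟨w, hw⟩ := exists_isLCA (reachable_of_not_onPath hxu) x
  have ⟨hwu, hwx, hdeepest⟩ := hw
  have hwX : w ∈ X := hcl u huX x hx w hw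
  have hw_ne : w ≠ x := fun h => hxu (h ▸ hwu)
  have hyv : G.dist r y < G.dist r v := hyx.dist_lt_dist hv hrx hvy
  have hvw : G.dist r v ≤ G.dist r w := hdeepest v hvu (hyx.trans hv)
  exact (hyv.trans_le hvw).not_ge (hclosest w hwX hw_ne hwx)

end RootedGraph

/-- Let `X` be an lca-closed `P`-multicut, `x ∈ X`, and `y ∈ X` the closest
strict ancestor of `x` in `X`.  Then for every `v ≠ y` on the `(y,x)`-path, no
terminal pair path of `P` is contained in `T_v - V(T_x)`. -/
theorem stmt_6 {V : Type*} [Fintype V] (T : SimpleGraph V) (hT : T.IsTree) (r : V)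
    (P : Set (V × V)) (X : Set V)
    (hX : IsMulticut T P X) (hcl : LCAClosed T r X)
    (x y : V) (hx : x ∈ X) (hy : y ∈ X)
    (hanc : y ≠ x ∧ InSubtree T r y x)
    (hclosest : ∀ y' ∈ X, y' ≠ x → InSubtree T r y' x → T.dist r y' ≤ T.dist r y)
    (v : V) (hv : OnPath T y x v) (hvy : v ≠ y) :
    ¬ ∃ s t : V, (s, t) ∈ P ∧ ∃ p : T.Walk s t, p.IsPath ∧
        ∀ u ∈ p.support, InSubtree T r v u ∧ ¬ InSubtree T r x u :=
  stmt_6_general hX hcl (hT.connected r x) hx hanc.2 hclosest hv hvy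
end
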